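/- arXiv:2306.11621 — 2 statements merged into one kernel-verified Lean document; each statement's English description precedes it below -/
import Mathlib

section
/- Suppose G is a unitary 1-design, that g_0, …, g_{d-1} ∈ G are such that the vectors |i⟩ := g_i|0⟩ form an orthonormal basis of ℂ^d, and that |Φ⟩ ∈ H_P satisfies Π_G|Φ⟩ ≠ 0. Define |ī⟩ := N ∑_{g∈G} ⟨0|g†|i⟩ ρ(g)|Φ⟩ with N = (d/|G|)/‖Π_G|Φ⟩‖. Then the family (|ī⟩)_{i=0,…,d−1} is an orthonormal family in H_P; equivalently, the linear map E : ℂ^d → H_P sending |i⟩ to |ī⟩ is an isometry. -/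
open scoped ComplexConjugate ComplexInnerProductSpace

noncomputable section

/-- The matrix underlying an element of a subgroup `G` of the unitary group. -/
def gMat {d : ℕ} {G : Subgroup (Matrix.unitaryGroup (Fin d) ℂ)} (g : G) :
    Matrix (Fin d) (Fin d) ℂ :=
  ((g : Matrix.unitaryGroup (Fin d) ℂ) : Matrix (Fin d) (Fin d) ℂ)

/-- The distinguished vector `|0⟩ = e₀` of `ℂ^d`. -/
def e0 (d : ℕ) [NeZero d] : EuclideanSpace ℂ (Fin d) := EuclideanSpace.single 0 1

/-- Action of an element of `G` on `ℂ^d`. -/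
def gAct {d : ℕ} {G : Subgroup (Matrix.unitaryGroup (Fin d) ℂ)} (g : G)
    (v : EuclideanSpace ℂ (Fin d)) : EuclideanSpace ℂ (Fin d) :=
  Matrix.toEuclideanLin (gMat g) v

/-- `G` is a unitary 1-design. -/
def IsUnitaryOneDesign {d : ℕ} (G : Subgroup (Matrix.unitaryGroup (Fin d) ℂ)) [Fintype G] :
    Prop :=
  ∀ A : Matrix (Fin d) (Fin d) ℂ,
    (Fintype.card G : ℂ)⁻¹ • ∑ g : G, gMat g * A * star (gMat g) = (A.trace / d) • 1

/-- The operator `Π_G := (d/|G|) ∑_{g∈G} ⟨0|g†|0⟩ ρ(g)`. -/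
def PiG {d : ℕ} [NeZero d] (G : Subgroup (Matrix.unitaryGroup (Fin d) ℂ)) [Fintype G]
    {H_P : Type*} [NormedAddCommGroup H_P] [InnerProductSpace ℂ H_P] [CompleteSpace H_P]
    (ρ : G →* unitary (H_P →L[ℂ] H_P)) : H_P →L[ℂ] H_P :=
  ((d : ℂ) / (Fintype.card G : ℂ)) •
    ∑ g : G, (starRingEnd ℂ) (gMat g 0 0) • ((ρ g : H_P →L[ℂ] H_P))

/-!
The map `T v = ∑ g, ⟪g e₀, v⟫ • ρ g Φ` intertwines the action of `G` on `ℂ^d` with `ρ`, so `T† T`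
commutes with `G`. Twirling over a 1-design sends every matrix to a scalar and fixes those
that commute with `G`, hence `T† T` is a scalar, `T` is a multiple of an isometry, and the multiple
can be read off from `T e₀`, which is `Π_G Φ` up to the factor `d / |G|`.
-/

open scoped InnerProductSpace

section Intertwiner

open ContinuousLinearMap

variable {𝕜 V H : Type*} [RCLike 𝕜]
  [NormedAddCommGroup V] [InnerProductSpace 𝕜 V] [CompleteSpace V]
  [NormedAddCommGroup H] [InnerProductSpace 𝕜 H] [CompleteSpace H]

theorem commute_adjoint_comp_self_of_intertwines {T : V →L[𝕜] H} {u : unitary (V →L[𝕜] V)}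
    {w : unitary (H →L[𝕜] H)} (hT : ∀ v, T ((u : V →L[𝕜] V) v) = (w : H →L[𝕜] H) (T v)) :
    Commute (u : V →L[𝕜] V) (adjoint T ∘L T) := by
  have hform : ∀ x y, ⟪(u : V →L[𝕜] V) x, (adjoint T ∘L T) ((u : V →L[𝕜] V) y)⟫_𝕜 =
      ⟪x, (adjoint T ∘L T) y⟫_𝕜 := fun x y => by
    simp only [comp_apply, adjoint_inner_right, hT, Unitary.inner_map_map]
  have hconj : star (u : V →L[𝕜] V) * ((adjoint T ∘L T) * u) = adjoint T ∘L T := by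
    ext y
    refine ext_inner_left 𝕜 fun x => ?_
    rw [star_eq_adjoint, mul_apply_eq_comp, adjoint_inner_right, mul_apply_eq_comp, hform]
  calc (u : V →L[𝕜] V) * (adjoint T ∘L T)
      = u * (star (u : V →L[𝕜] V) * ((adjoint T ∘L T) * u)) := by rw [hconj]
    _ = (adjoint T ∘L T) * u := by rw [← mul_assoc, Unitary.mul_star_self_of_mem u.2, one_mul]

theorem inner_map_map_of_adjoint_comp_self_eq_smul_one {T : V →L[𝕜] H} {c : 𝕜}
    (hT : adjoint T ∘L T = c • 1) {ξ : V} (hξ : ‖ξ‖ = 1) (v w : V) :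
    ⟪T v, T w⟫_𝕜 = (‖T ξ‖ : 𝕜) ^ 2 * ⟪v, w⟫_𝕜 := by
  have hinner : ∀ x y, ⟪T x, T y⟫_𝕜 = c * ⟪x, y⟫_𝕜 := fun x y => by
    rw [← adjoint_inner_right, ← comp_apply, hT, smul_apply, one_apply_eq_self, inner_smul_right]
  have hc : (‖T ξ‖ : 𝕜) ^ 2 = c := by
    rw [← inner_self_eq_norm_sq_to_K, hinner, inner_self_eq_norm_sq_to_K, hξ]
    simp
  rw [hinner, hc]

end Intertwiner

theorem orthonormal_smul_map {𝕜 V H ι : Type*} [RCLike 𝕜]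
    [SeminormedAddCommGroup V] [InnerProductSpace 𝕜 V]
    [SeminormedAddCommGroup H] [InnerProductSpace 𝕜 H]
    {T : V → H} {r : ℝ} (hT : ∀ v w, ⟪T v, T w⟫_𝕜 = (r : 𝕜) ^ 2 * ⟪v, w⟫_𝕜)
    {a : 𝕜} (ha : ‖a‖ * r = 1) {v : ι → V} (hv : Orthonormal 𝕜 v) :
    Orthonormal 𝕜 fun i => a • T (v i) := by
  classical
  rw [orthonormal_iff_ite] at hv ⊢
  intro i j
  have hscale : conj a * a * (r : 𝕜) ^ 2 = 1 := by
    rw [RCLike.conj_mul, ← mul_pow, ← RCLike.ofReal_mul, ha, RCLike.ofReal_one, one_pow]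
  calc ⟪a • T (v i), a • T (v j)⟫_𝕜
      = conj a * a * (r : 𝕜) ^ 2 * ⟪v i, v j⟫_𝕜 := by
        rw [inner_smul_left, inner_smul_right, hT]; ring
    _ = if i = j then 1 else 0 := by rw [hscale, one_mul, hv]

section OrbitOperator

variable {𝕜 G V H : Type*} [RCLike 𝕜] [Group G] [Fintype G]
  [NormedAddCommGroup V] [InnerProductSpace 𝕜 V] [CompleteSpace V]
  [NormedAddCommGroup H] [InnerProductSpace 𝕜 H] [CompleteSpace H]
  (π : G →* unitary (V →L[𝕜] V)) (ρ : G →* unitary (H →L[𝕜] H)) (ξ : V) (Φ : H)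

/-- The operator `∑ g, ρ g |Φ⟩⟨ξ| (π g)†` obtained by averaging, without the factor `1 / |G|`, the
rank-one operator `|Φ⟩⟨ξ|` over two unitary representations. For `ξ = e₀` it is the encoding map
before normalization. -/
def orbitOperator : V →L[𝕜] H :=
  ∑ g, InnerProductSpace.rankOne 𝕜 ((ρ g : H →L[𝕜] H) Φ) ((π g : V →L[𝕜] V) ξ)

theorem orbitOperator_apply (v : V) :
    orbitOperator π ρ ξ Φ v = ∑ g, ⟪(π g : V →L[𝕜] V) ξ, v⟫_𝕜 • (ρ g : H →L[𝕜] H) Φ := by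
  simp [orbitOperator]

theorem orbitOperator_intertwines (h : G) (v : V) :
    orbitOperator π ρ ξ Φ ((π h : V →L[𝕜] V) v) =
      (ρ h : H →L[𝕜] H) (orbitOperator π ρ ξ Φ v) := by
  simp only [orbitOperator_apply, map_sum, map_smul]
  rw [← Equiv.sum_comp (Equiv.mulLeft h)]
  simp only [Equiv.coe_mulLeft, map_mul, Submonoid.coe_mul, mul_apply_eq_comp,
    Unitary.inner_map_map]

end OrbitOperator

section OneDesign

variable {d : ℕ} {G : Subgroup (Matrix.unitaryGroup (Fin d) ℂ)}

/-- The defining representation of a group of unitary matrices, on `ℂ^d` with its Euclidean inner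
product; it is `gAct` packaged as a homomorphism into the unitary operators. -/
def definingRep (G : Subgroup (Matrix.unitaryGroup (Fin d) ℂ)) :
    G →* unitary (EuclideanSpace ℂ (Fin d) →L[ℂ] EuclideanSpace ℂ (Fin d)) where
  toFun g := ⟨Matrix.toEuclideanCLM (𝕜 := ℂ) (gMat g), Unitary.map_mem _ g.1.2⟩
  map_one' := Subtype.ext (map_one _)
  map_mul' _ _ := Subtype.ext (map_mul _ _ _)

theorem definingRep_apply (g : G) (v : EuclideanSpace ℂ (Fin d)) :
    (definingRep G g : EuclideanSpace ℂ (Fin d) →L[ℂ] EuclideanSpace ℂ (Fin d)) v = gAct g v :=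
  rfl

variable [Fintype G]

theorem IsUnitaryOneDesign.eq_smul_one_of_commute (hG : IsUnitaryOneDesign G)
    {A : Matrix (Fin d) (Fin d) ℂ} (hA : ∀ g : G, Commute (gMat g) A) :
    A = (A.trace / d) • 1 := by
  have hfix : ∀ g : G, gMat g * A * star (gMat g) = A := fun g => by
    rw [(hA g).eq, mul_assoc, gMat, Unitary.mul_star_self_of_mem g.1.2, mul_one]
  have hcard : (Fintype.card G : ℂ) ≠ 0 := Nat.cast_ne_zero.mpr Fintype.card_ne_zero
  calc A = (Fintype.card G : ℂ)⁻¹ • ∑ g : G, gMat g * A * star (gMat g) := by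
        rw [Finset.sum_congr rfl fun g _ => hfix g, Finset.sum_const, Finset.card_univ,
          ← Nat.cast_smul_eq_nsmul ℂ, inv_smul_smul₀ hcard]
    _ = (A.trace / d) • 1 := hG A

theorem IsUnitaryOneDesign.exists_eq_smul_one_of_commute (hG : IsUnitaryOneDesign G)
    {A : EuclideanSpace ℂ (Fin d) →L[ℂ] EuclideanSpace ℂ (Fin d)}
    (hA : ∀ g : G, Commute (definingRep G g : EuclideanSpace ℂ (Fin d) →L[ℂ] _) A) :
    ∃ c : ℂ, A = c • 1 := by
  obtain ⟨M, rfl⟩ := EquivLike.surjective (Matrix.toEuclideanCLM (n := Fin d) (𝕜 := ℂ)) A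
  have hM : ∀ g : G, Commute (gMat g) M := fun g =>
    (hA g).of_map (EquivLike.injective (Matrix.toEuclideanCLM (n := Fin d) (𝕜 := ℂ)))
  refine ⟨M.trace / d, ?_⟩
  conv_lhs => rw [hG.eq_smul_one_of_commute hM, map_smul, map_one]

variable {H : Type*} [NormedAddCommGroup H] [InnerProductSpace ℂ H] [CompleteSpace H]
  (ρ : G →* unitary (H →L[ℂ] H))

theorem IsUnitaryOneDesign.inner_orbitOperator (hG : IsUnitaryOneDesign G)
    {ξ : EuclideanSpace ℂ (Fin d)} (hξ : ‖ξ‖ = 1) (Φ : H) (v w : EuclideanSpace ℂ (Fin d)) :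
    ⟪orbitOperator (definingRep G) ρ ξ Φ v, orbitOperator (definingRep G) ρ ξ Φ w⟫ =
      (‖orbitOperator (definingRep G) ρ ξ Φ ξ‖ : ℂ) ^ 2 * ⟪v, w⟫ := by
  obtain ⟨c, hc⟩ := hG.exists_eq_smul_one_of_commute fun g =>
    commute_adjoint_comp_self_of_intertwines (orbitOperator_intertwines (definingRep G) ρ ξ Φ g)
  exact inner_map_map_of_adjoint_comp_self_eq_smul_one hc hξ v w

theorem PiG_apply_eq_smul_orbitOperator [NeZero d] (Φ : H) :
    PiG G ρ Φ =
      ((d : ℂ) / Fintype.card G) • orbitOperator (definingRep G) ρ (e0 d) Φ (e0 d) := by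
  have hentry : ∀ g : G, ⟪gAct g (e0 d), e0 d⟫ = conj (gMat g 0 0) := fun g => by
    simp [gAct, e0, EuclideanSpace.inner_single_right]
  simp [PiG, orbitOperator_apply, definingRep_apply, hentry]

theorem encoded_basis_orthonormal_general [NeZero d] (hdesign : IsUnitaryOneDesign G)
    {ι : Type*} {v : ι → EuclideanSpace ℂ (Fin d)} (hv : Orthonormal ℂ v)
    (Φ : H) (hΦ : PiG G ρ Φ ≠ 0) :
    Orthonormal ℂ fun i => (((d : ℂ) / (Fintype.card G : ℂ)) / (‖PiG G ρ Φ‖ : ℂ)) •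
      ∑ g : G, ⟪gAct g (e0 d), v i⟫ • (ρ g : H →L[ℂ] H) Φ := by
  have he0 : ‖e0 d‖ = 1 := by simp [e0]
  have hscale : ‖((d : ℂ) / Fintype.card G) / (‖PiG G ρ Φ‖ : ℂ)‖ *
      ‖orbitOperator (definingRep G) ρ (e0 d) Φ (e0 d)‖ = 1 := by
    rw [norm_div, Complex.norm_real, norm_norm, div_mul_eq_mul_div, ← norm_smul,
      ← PiG_apply_eq_smul_orbitOperator, div_self (norm_ne_zero_iff.mpr hΦ)]
  simpa only [orbitOperator_apply, definingRep_apply] using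
    orthonormal_smul_map (hdesign.inner_orbitOperator ρ he0 Φ) hscale hv

end OneDesign

/-- With the encoding `|ī⟩ := N ∑_g ⟨0|g†|i⟩ ρ(g)|Φ⟩`, `N = (d/|G|)/‖Π_G|Φ⟩‖`, the family
`(|ī⟩)_i` is orthonormal in the physical space, i.e. the encoding is an isometry. -/
theorem encoded_basis_orthonormal (d : ℕ) [NeZero d]
    (G : Subgroup (Matrix.unitaryGroup (Fin d) ℂ)) [Fintype G]
    {H_P : Type*} [NormedAddCommGroup H_P] [InnerProductSpace ℂ H_P] [CompleteSpace H_P]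
    (ρ : G →* unitary (H_P →L[ℂ] H_P))
    (hdesign : IsUnitaryOneDesign G)
    (gs : Fin d → G)
    (hbasis : Orthonormal ℂ (fun i : Fin d => gAct (gs i) (e0 d)))
    (Φ : H_P) (hΦ : PiG G ρ Φ ≠ 0)
    (ibar : Fin d → H_P)
    (hibar : ∀ i : Fin d,
      ibar i = (((d : ℂ) / (Fintype.card G : ℂ)) / (‖PiG G ρ Φ‖ : ℂ)) •
        ∑ g : G, ⟪gAct g (e0 d), gAct (gs i) (e0 d)⟫ • ((ρ g : H_P →L[ℂ] H_P) Φ)) :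
    Orthonormal ℂ ibar := by
  obtain rfl : ibar = _ := funext hibar
  exact encoded_basis_orthonormal_general ρ hdesign hbasis Φ hΦ

end
end

section
/- Suppose G is a unitary 1-design and E' : ℂ^d → H_P is a linear map satisfying the equivariance condition E'(g|ψ⟩) = ρ(g) E'(|ψ⟩) for all g ∈ G and all |ψ⟩ ∈ ℂ^d, and such that E'(|0⟩) is a unit vector. Then every encoding of this form is given by the construction of the main lemma: for every |ψ⟩ ∈ ℂ^d, E'(|ψ⟩) = (d/|G|) ∑_{g∈G} ⟨0|g†|ψ⟩ ρ(g) E'(|0⟩). -/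
open scoped ComplexConjugate ComplexInnerProductSpace

noncomputable section

/-!
Conjugating the rank-one matrix `|χ⟩⟨φ|` by `g` gives `|gχ⟩⟨gφ|`, so the 1-design property applied
to it reads `(d/|G|) ∑_g |gχ⟩⟨gφ| = ⟨φ|χ⟩ 1`. For a unit vector `φ = χ` this expands every `ψ` along
the orbit of `φ`, and a linear map that is equivariant on that orbit is thereby determined by its
value at `φ`.
-/

theorem mul_vecMulVec_star_mul_conjTranspose {l m n o R : Type*} [Fintype m] [Fintype n]
    [NonUnitalSemiring R] [StarRing R]
    (M : Matrix l m R) (N : Matrix o n R) (x : m → R) (y : n → R) :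
    M * Matrix.vecMulVec x (star y) * N.conjTranspose =
      Matrix.vecMulVec (M.mulVec x) (star (N.mulVec y)) := by
  rw [Matrix.mul_vecMulVec, Matrix.vecMulVec_mul, Matrix.star_mulVec]

theorem toEuclideanLin_vecMulVec_star_apply {𝕜 m n : Type*} [RCLike 𝕜] [Fintype n] [DecidableEq n]
    (x : EuclideanSpace 𝕜 m) (y z : EuclideanSpace 𝕜 n) :
    Matrix.toEuclideanLin (Matrix.vecMulVec x (star y)) z = inner 𝕜 y z • x := by
  ext i
  simp [Matrix.toLpLin_apply, Matrix.vecMulVec_mulVec, EuclideanSpace.inner_eq_star_dotProduct,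
    dotProduct_comm, mul_comm]

section

variable {d : ℕ} {G : Subgroup (Matrix.unitaryGroup (Fin d) ℂ)}

theorem toEuclideanLin_gMat_conj_vecMulVec_star_apply (g : G)
    (χ φ ψ : EuclideanSpace ℂ (Fin d)) :
    Matrix.toEuclideanLin (gMat g * Matrix.vecMulVec χ (star φ) * star (gMat g)) ψ =
      ⟪gAct g φ, ψ⟫ • gAct g χ := by
  rw [Matrix.star_eq_conjTranspose, mul_vecMulVec_star_mul_conjTranspose]
  exact toEuclideanLin_vecMulVec_star_apply (gAct g χ) (gAct g φ) ψ

variable [Fintype G]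

theorem IsUnitaryOneDesign.smul_sum_conj (hG : IsUnitaryOneDesign G)
    (A : Matrix (Fin d) (Fin d) ℂ) :
    ((d : ℂ) / Fintype.card G) • ∑ g : G, gMat g * A * star (gMat g) = A.trace • 1 := by
  rcases Nat.eq_zero_or_pos d with rfl | hd
  · exact Subsingleton.elim _ _
  · have hd' : (d : ℂ) ≠ 0 := Nat.cast_ne_zero.mpr hd.ne'
    rw [div_eq_mul_inv, mul_smul, hG A, smul_smul, mul_div_cancel₀ _ hd']

theorem IsUnitaryOneDesign.smul_sum_inner_smul_gAct (hG : IsUnitaryOneDesign G)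
    (φ χ ψ : EuclideanSpace ℂ (Fin d)) :
    ((d : ℂ) / Fintype.card G) • ∑ g : G, ⟪gAct g φ, ψ⟫ • gAct g χ = ⟪φ, χ⟫ • ψ := by
  have htrace : (Matrix.vecMulVec χ (star φ)).trace = ⟪φ, χ⟫ := by
    rw [Matrix.trace_vecMulVec, EuclideanSpace.inner_eq_star_dotProduct]
  have h := congrArg (fun A ↦ Matrix.toEuclideanLin A ψ)
    (hG.smul_sum_conj (Matrix.vecMulVec χ (star φ)))
  simpa only [map_smul, map_sum, LinearMap.smul_apply, LinearMap.sum_apply, htrace,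
    toEuclideanLin_gMat_conj_vecMulVec_star_apply, Matrix.toLpLin_one, LinearMap.id_apply] using h

theorem equivariant_encoding_eq_general (hdesign : IsUnitaryOneDesign G)
    {V : Type*} [AddCommMonoid V] [Module ℂ V] (ρ : G → V → V)
    (E : EuclideanSpace ℂ (Fin d) →ₗ[ℂ] V) {φ : EuclideanSpace ℂ (Fin d)} (hφ : ‖φ‖ = 1)
    (hequiv : ∀ g : G, E (gAct g φ) = ρ g (E φ)) (ψ : EuclideanSpace ℂ (Fin d)) :
    E ψ = ((d : ℂ) / Fintype.card G) • ∑ g : G, ⟪gAct g φ, ψ⟫ • ρ g (E φ) := by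
  have hinner : ⟪φ, φ⟫ = 1 := inner_self_eq_one_of_norm_eq_one hφ
  calc
    E ψ = E (((d : ℂ) / Fintype.card G) • ∑ g : G, ⟪gAct g φ, ψ⟫ • gAct g φ) := by
      rw [hdesign.smul_sum_inner_smul_gAct, hinner, one_smul]
    _ = ((d : ℂ) / Fintype.card G) • ∑ g : G, ⟪gAct g φ, ψ⟫ • ρ g (E φ) := by
      simp only [map_smul, map_sum, hequiv]

end

theorem norm_e0 (d : ℕ) [NeZero d] : ‖e0 d‖ = 1 := by
  simp [e0]

/-- Any `G`-equivariant linear encoding `E'` with `E'(|0⟩)` a unit vector is given by the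
construction of the main lemma: `E'(|ψ⟩) = (d/|G|) ∑_g ⟨0|g†|ψ⟩ ρ(g) E'(|0⟩)`. -/
theorem equivariant_encoding_eq (d : ℕ) [NeZero d]
    (G : Subgroup (Matrix.unitaryGroup (Fin d) ℂ)) [Fintype G]
    {H_P : Type*} [NormedAddCommGroup H_P] [InnerProductSpace ℂ H_P] [CompleteSpace H_P]
    (ρ : G →* unitary (H_P →L[ℂ] H_P))
    (hdesign : IsUnitaryOneDesign G)
    (E' : EuclideanSpace ℂ (Fin d) →ₗ[ℂ] H_P)
    (hequiv : ∀ (g : G) (ψ : EuclideanSpace ℂ (Fin d)),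
      E' (gAct g ψ) = (ρ g : H_P →L[ℂ] H_P) (E' ψ))
    (hnorm : ‖E' (e0 d)‖ = 1) :
    ∀ ψ : EuclideanSpace ℂ (Fin d),
      E' ψ = ((d : ℂ) / (Fintype.card G : ℂ)) •
        ∑ g : G, ⟪gAct g (e0 d), ψ⟫ • ((ρ g : H_P →L[ℂ] H_P) (E' (e0 d))) := by
  exact equivariant_encoding_eq_general hdesign (fun g ↦ (ρ g : H_P →L[ℂ] H_P)) E' (norm_e0 d)
    fun g ↦ hequiv g (e0 d)

end
end
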